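/- arXiv:2402.14153 — 4 statements merged into one kernel-verified Lean document; each statement's English description precedes it below -/
import Mathlib

section
/- Let n = 3 and G = SL_3(ℤ). Then the image of ∂[e_1, e_2, e_3, e_1−e_2, e_1−e_3, e_2−e_3] in the coinvariant space Sh_2 ⊗_G ℚ is zero; that is, each of the six basic 2-sharbly classes obtained by deleting one entry of the 6-tuple (e_1, e_2, e_3, e_1−e_2, e_1−e_3, e_2−e_3), with its alternating sign, sums to zero in Sh_2 ⊗_G ℚ. (This is the statement that z = [e_1,e_2,e_3,e_1−e_2,e_1−e_3,e_2−e_3]_G is a sharbly cycle for SL_3(ℤ).) -/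
/-!
Sharbly spaces and coinvariants, following Ash–Gunnells–McConnell.

For fixed `n ≥ 1` and `k ≥ 0`, the sharbly space `Sh_k` is the ℚ-vector space
generated by symbols `[v_1, …, v_{n+k}]` (each `v_i` a nonzero vector in ℚ^n)
modulo the relations (i) antisymmetry under permutations, (ii) vanishing when
the `v_i` do not span ℚ^n, (iii) invariance under scaling an entry by a nonzero
rational.  We realize this as a quotient of the free ℚ-module on *all* tuples,
additionally killing the tuples having a zero entry (so that the quotient is
generated exactly by the tuples of nonzero vectors).  The coinvariant space
`Sh_k ⊗_G ℚ` for `G = SL_n(ℤ)` is obtained by further quotienting by the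
relations `g • x − x`; quotienting by all the relations at once yields the same
space.
-/

open Matrix

namespace Sharbly

abbrev Vec (n : ℕ) := Fin n → ℚ

abbrev Tup (n k : ℕ) := Fin (n + k) → Vec n

/-- The generator of the free ℚ-module corresponding to the symbol `[v_1,…,v_{n+k}]`. -/
noncomputable def gen (n k : ℕ) (v : Tup n k) : Tup n k →₀ ℚ := Finsupp.single v 1

/-- The action of `g ∈ SL_n(ℤ)` on a tuple of vectors in ℚ^n. -/
def actTup (n k : ℕ) (g : Matrix.SpecialLinearGroup (Fin n) ℤ) (v : Tup n k) : Tup n k :=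
  fun i => ((g : Matrix (Fin n) (Fin n) ℤ).map (Int.cast : ℤ → ℚ)).mulVec (v i)

/-- The subspace of relations: (i) antisymmetry, (ii) non-spanning tuples,
(iii) scaling an entry by a nonzero rational, (iv) tuples with a zero entry
(so that the quotient is the sharbly space, generated by tuples of nonzero
vectors), and (v) the coinvariant relations `g•x − x` for `g ∈ SL_n(ℤ)`. -/
noncomputable def coinvRel (n k : ℕ) : Submodule ℚ (Tup n k →₀ ℚ) :=
  Submodule.span ℚ
    ( {x | ∃ (v : Tup n k) (σ : Equiv.Perm (Fin (n + k))),
          x = gen n k (v ∘ σ) - ((Equiv.Perm.sign σ : ℤ) : ℚ) • gen n k v}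
    ∪ {x | ∃ v : Tup n k, Submodule.span ℚ (Set.range v) ≠ ⊤ ∧ x = gen n k v}
    ∪ {x | ∃ (v : Tup n k) (i : Fin (n + k)) (a : ℚ), a ≠ 0 ∧
          x = gen n k v - gen n k (Function.update v i (a • v i))}
    ∪ {x | ∃ (v : Tup n k) (i : Fin (n + k)), v i = 0 ∧ x = gen n k v}
    ∪ {x | ∃ (v : Tup n k) (g : Matrix.SpecialLinearGroup (Fin n) ℤ),
          x = gen n k (actTup n k g v) - gen n k v} )

/-- The coinvariant space `Sh_k ⊗_G ℚ` for `G = SL_n(ℤ)`. -/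
abbrev ShCoinv (n k : ℕ) := (Tup n k →₀ ℚ) ⧸ coinvRel n k

/-- The class `[v_1,…,v_{n+k}]_G` in the coinvariant space. -/
noncomputable def cls (n k : ℕ) (v : Tup n k) : ShCoinv n k :=
  Submodule.Quotient.mk (gen n k v)

/-- The standard basis vector `e_i` of ℚ^n. -/
noncomputable def e (n : ℕ) (i : Fin n) : Vec n := Pi.single i 1

end Sharbly

open Sharbly

/-- Scaling every entry by nonzero rationals does not change the class. -/
theorem cls_smul_aux (v : Tup 3 2) (s : Fin 5 → ℚ) (hs : ∀ i, s i ≠ 0) (t : Finset (Fin 5)) :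
    cls 3 2 (fun i => if i ∈ t then s i • v i else v i) = cls 3 2 v := by
  induction t using Finset.induction_on with
  | empty => simp
  | insert a t ha ih =>
    rw [← ih]
    symm
    refine (Submodule.Quotient.eq _).2 (Submodule.subset_span ?_)
    refine Or.inl (Or.inl (Or.inr ⟨fun i => if i ∈ t then s i • v i else v i, a, s a, hs a, ?_⟩))
    congr 2
    funext i
    by_cases h : i = a
    · subst h
      simp [ha]
    · simp [Function.update_of_ne h, Finset.mem_insert, h]

theorem cls_smul (v : Tup 3 2) (s : Fin 5 → ℚ) (hs : ∀ i, s i ≠ 0) :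
    cls 3 2 (fun i => s i • v i) = cls 3 2 v := by
  have h := cls_smul_aux v s hs Finset.univ
  simpa using h

/-- A class with an odd symmetry (up to scaling) vanishes. -/
theorem cls_eq_zero (v : Tup 3 2) (M : Matrix (Fin 3) (Fin 3) ℤ) (hM : M.det = 1)
    (a b : Fin 5) (hab : a ≠ b) (s : Fin 5 → ℚ) (hs : ∀ i, s i ≠ 0)
    (h : ∀ i, (M.map (Int.cast : ℤ → ℚ)).mulVec (v i) = s i • v (Equiv.swap a b i)) :
    cls 3 2 v = 0 := by
  have h1 : cls 3 2 (actTup 3 2 ⟨M, hM⟩ v) = cls 3 2 v :=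
    (Submodule.Quotient.eq _).2 (Submodule.subset_span (Or.inr ⟨v, ⟨M, hM⟩, rfl⟩))
  have h2 : actTup 3 2 ⟨M, hM⟩ v = fun i => s i • (v ∘ (Equiv.swap a b : Equiv.Perm (Fin 5))) i :=
    funext h
  have h3 : cls 3 2 (v ∘ (Equiv.swap a b : Equiv.Perm (Fin 5)))
      = ((Equiv.Perm.sign (Equiv.swap a b) : ℤ) : ℚ) • cls 3 2 v :=
    (Submodule.Quotient.eq _).2 (Submodule.subset_span
      (Or.inl (Or.inl (Or.inl (Or.inl ⟨v, Equiv.swap a b, rfl⟩)))))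
  rw [h2, cls_smul _ s hs, h3, Equiv.Perm.sign_swap hab] at h1
  have h4 : -cls 3 2 v = cls 3 2 v := by simpa using h1
  have h5 : (2 : ℚ) • cls 3 2 v = 0 := by
    rw [two_smul]
    nth_rewrite 1 [← h4]
    exact neg_add_cancel _
  exact (smul_eq_zero.mp h5).resolve_left two_ne_zero

/-- For `n = 3`, `G = SL_3(ℤ)`: the image of
`∂[e₁, e₂, e₃, e₁−e₂, e₁−e₃, e₂−e₃]` in the coinvariant space `Sh_2 ⊗_G ℚ`
vanishes: the six basic 2-sharbly classes obtained by deleting one entry, taken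
with alternating signs `(−1)^{i+1}`, sum to zero.  (That is,
`z = [e₁,e₂,e₃,e₁−e₂,e₁−e₃,e₂−e₃]_G` is a sharbly cycle for `SL_3(ℤ)`.) -/
theorem boundary_of_A3_tile_vanishes :
    cls 3 2 ![e 3 1, e 3 2, e 3 0 - e 3 1, e 3 0 - e 3 2, e 3 1 - e 3 2]
      - cls 3 2 ![e 3 0, e 3 2, e 3 0 - e 3 1, e 3 0 - e 3 2, e 3 1 - e 3 2]
      + cls 3 2 ![e 3 0, e 3 1, e 3 0 - e 3 1, e 3 0 - e 3 2, e 3 1 - e 3 2]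
      - cls 3 2 ![e 3 0, e 3 1, e 3 2, e 3 0 - e 3 2, e 3 1 - e 3 2]
      + cls 3 2 ![e 3 0, e 3 1, e 3 2, e 3 0 - e 3 1, e 3 1 - e 3 2]
      - cls 3 2 ![e 3 0, e 3 1, e 3 2, e 3 0 - e 3 1, e 3 0 - e 3 2] = 0 := by
  have e0 : e 3 0 = ![1, 0, 0] := by
    funext i; fin_cases i <;> simp [e]
  have e1 : e 3 1 = ![0, 1, 0] := by
    funext i; fin_cases i <;> simp [e]
  have e2 : e 3 2 = ![0, 0, 1] := by
    funext i; fin_cases i <;> simp [e]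
  have h0 : cls 3 2 ![e 3 1, e 3 2, e 3 0 - e 3 1, e 3 0 - e 3 2, e 3 1 - e 3 2] = 0 := by
    refine cls_eq_zero _ !![1,0,0;-1,-1,0;-1,0,-1] (by simp [Matrix.det_fin_three]) 2 3 (by decide)
      ![-1,-1,1,1,-1] (by intro i; fin_cases i <;> simp) ?_
    rw [e0, e1, e2]
    intro i
    fin_cases i <;> funext j <;> fin_cases j <;>
      simp [Matrix.mulVec, dotProduct, Fin.sum_univ_three, Equiv.swap_apply_def]
  have h1 : cls 3 2 ![e 3 0, e 3 2, e 3 0 - e 3 1, e 3 0 - e 3 2, e 3 1 - e 3 2] = 0 := by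
    refine cls_eq_zero _ !![-1,-1,0;0,1,0;0,-1,-1] (by simp [Matrix.det_fin_three]) 2 4 (by decide)
      ![-1,-1,-1,-1,-1] (by intro i; fin_cases i <;> simp) ?_
    rw [e0, e1, e2]
    intro i
    fin_cases i <;> funext j <;> fin_cases j <;>
      simp [Matrix.mulVec, dotProduct, Fin.sum_univ_three, Equiv.swap_apply_def]
  have h2 : cls 3 2 ![e 3 0, e 3 1, e 3 0 - e 3 1, e 3 0 - e 3 2, e 3 1 - e 3 2] = 0 := by
    refine cls_eq_zero _ !![-1,0,-1;0,-1,-1;0,0,1] (by simp [Matrix.det_fin_three]) 3 4 (by decide)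
      ![-1,-1,-1,1,1] (by intro i; fin_cases i <;> simp) ?_
    rw [e0, e1, e2]
    intro i
    fin_cases i <;> funext j <;> fin_cases j <;>
      simp [Matrix.mulVec, dotProduct, Fin.sum_univ_three, Equiv.swap_apply_def]
  have h3 : cls 3 2 ![e 3 0, e 3 1, e 3 2, e 3 0 - e 3 2, e 3 1 - e 3 2] = 0 := by
    refine cls_eq_zero _ !![1,0,0;0,-1,0;-1,0,-1] (by simp [Matrix.det_fin_three]) 0 3 (by decide)
      ![1,-1,-1,1,-1] (by intro i; fin_cases i <;> simp) ?_
    rw [e0, e1, e2]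
    intro i
    fin_cases i <;> funext j <;> fin_cases j <;>
      simp [Matrix.mulVec, dotProduct, Fin.sum_univ_three, Equiv.swap_apply_def]
  have h4 : cls 3 2 ![e 3 0, e 3 1, e 3 2, e 3 0 - e 3 1, e 3 1 - e 3 2] = 0 := by
    refine cls_eq_zero _ !![1,0,0;-1,-1,0;0,0,-1] (by simp [Matrix.det_fin_three]) 0 3 (by decide)
      ![1,-1,-1,1,-1] (by intro i; fin_cases i <;> simp) ?_
    rw [e0, e1, e2]
    intro i
    fin_cases i <;> funext j <;> fin_cases j <;>
      simp [Matrix.mulVec, dotProduct, Fin.sum_univ_three, Equiv.swap_apply_def]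
  have h5 : cls 3 2 ![e 3 0, e 3 1, e 3 2, e 3 0 - e 3 1, e 3 0 - e 3 2] = 0 := by
    refine cls_eq_zero _ !![-1,-1,0;0,1,0;0,0,-1] (by simp [Matrix.det_fin_three]) 1 3 (by decide)
      ![-1,-1,-1,-1,-1] (by intro i; fin_cases i <;> simp) ?_
    rw [e0, e1, e2]
    intro i
    fin_cases i <;> funext j <;> fin_cases j <;>
      simp [Matrix.mulVec, dotProduct, Fin.sum_univ_three, Equiv.swap_apply_def]
  rw [h0, h1, h2, h3, h4, h5]
  simp
end

section
/- Let V be a type, let p ≥ 3 be an integer, let z_1, …, z_p be pairwise distinct elements of V, and let ε : {1,…,p} → {+1, −1} be a choice of signs. If Σ_{i=1}^{p} ε(i) · ∂(z_1, …, ẑ_i, …, z_p) = 0 in A_{p−2}, then either ε(i) = (−1)^i for all i, or ε(i) = (−1)^{i+1} for all i. -/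
/-!
The antisymmetrized chain groups `A_r` of a type `V`: the free ℤ-module on
symbols `(a_1,…,a_r)` with `a_i ∈ V`, modulo the relations
`(a_{σ(1)},…,a_{σ(r)}) = sign(σ)·(a_1,…,a_r)` for all permutations `σ`.
The boundary `∂(a_1,…,a_r) = Σ_{i=1}^{r} (−1)^i (a_1,…,â_i,…,a_r)`.
(We index tuples by `Fin r`, so the entry with index `j : Fin r` is the
`(j+1)`-st entry of the paper, and its sign in the boundary is `(−1)^{j+1}`.)
-/

namespace AltChains

/-- The free ℤ-module on `r`-tuples of elements of `V`. -/
abbrev AFree (V : Type*) (r : ℕ) := (Fin r → V) →₀ ℤ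

/-- The antisymmetry relations. -/
noncomputable def altRel (V : Type*) (r : ℕ) : Submodule ℤ (AFree V r) :=
  Submodule.span ℤ {x | ∃ (a : Fin r → V) (σ : Equiv.Perm (Fin r)),
    x = Finsupp.single (a ∘ σ) 1 - (Equiv.Perm.sign σ : ℤ) • Finsupp.single a 1}

/-- The antisymmetrized module `A_r`. -/
abbrev A (V : Type*) (r : ℕ) := AFree V r ⧸ altRel V r

/-- The class of the symbol `(a_1,…,a_r)` in `A_r`. -/
noncomputable def mkA (V : Type*) (r : ℕ) (a : Fin r → V) : A V r :=
  Submodule.Quotient.mk (Finsupp.single a 1)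

/-- The boundary `∂(a_1,…,a_{m+1}) = Σ_i (−1)^i (a_1,…,â_i,…,a_{m+1}) ∈ A_m`
of a basic symbol (with the paper's 1-indexed signs: the entry of index
`j : Fin (m+1)` is the `(j+1)`-st, with sign `(−1)^{j+1}`). -/
noncomputable def bdrySymb (V : Type*) (m : ℕ) (a : Fin (m + 1) → V) : A V m :=
  ∑ j : Fin (m + 1), ((-1 : ℤ) ^ (j.val + 1)) • mkA V m (j.removeNth a)

end AltChains

open AltChains

open Classical in
/-- The functional on the free module reading off the coefficient of `b`. -/
noncomputable def coefFree (V : Type*) (r : ℕ) (b : Fin r → V) : AFree V r →ₗ[ℤ] ℤ :=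
  Finsupp.linearCombination ℤ
    (fun a : Fin r → V => Matrix.det (Matrix.of fun i j => if a i = b j then (1 : ℤ) else 0))

/-- The coefficient functional descends to the quotient. -/
noncomputable def coefA (V : Type*) (r : ℕ) (b : Fin r → V) : A V r →ₗ[ℤ] ℤ :=
  (altRel V r).liftQ (coefFree V r b) (by
    classical
    unfold altRel
    rw [Submodule.span_le]
    rintro x ⟨a, σ, rfl⟩
    have := Matrix.det_permute σ
      (Matrix.of fun i j => if a i = b j then (1 : ℤ) else 0)
    simp only [SetLike.mem_coe, LinearMap.mem_ker, map_sub, map_smul, coefFree,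
      Finsupp.linearCombination_single, one_smul, smul_eq_mul]
    rw [sub_eq_zero]
    simpa [Matrix.submatrix] using this)

open Classical in
theorem coefA_mk (V : Type*) (r : ℕ) (b a : Fin r → V) :
    coefA V r b (mkA V r a) =
      Matrix.det (Matrix.of fun i j => if a i = b j then (1 : ℤ) else 0) := by
  unfold coefA mkA
  erw [Submodule.liftQ_apply]
  simp [coefFree]

theorem coefA_self (V : Type*) (r : ℕ) (b : Fin r → V) (hb : Function.Injective b) :
    coefA V r b (mkA V r b) = 1 := by
  classical
  rw [coefA_mk]
  convert Matrix.det_one (n := Fin r) (R := ℤ)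
  ext i j
  simp [Matrix.one_apply, hb.eq_iff]

theorem coefA_miss (V : Type*) (r : ℕ) (b a : Fin r → V) (m : Fin r) (hm : ∀ i, a i ≠ b m) :
    coefA V r b (mkA V r a) = 0 := by
  classical
  rw [coefA_mk]
  apply Matrix.det_eq_zero_of_column_eq_zero m
  intro i
  simp [hm i]

/-- Let `z_1, …, z_p` (`p ≥ 3`, here `p = n + 3`) be pairwise distinct elements
of `V` and `ε` a choice of signs `±1`.  If
`Σ_{i=1}^{p} ε(i) · ∂(z_1,…,ẑ_i,…,z_p) = 0` in `A_{p−2}`, then either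
`ε(i) = (−1)^i` for all `i` or `ε(i) = (−1)^{i+1}` for all `i` (in the
0-indexed formulation, `ε` at index `i : Fin p` equals `(−1)^{i+1}` for all
`i`, or `(−1)^i` for all `i`). -/
theorem signs_of_vanishing_alternating_sum (V : Type*) (n : ℕ)
    (z : Fin (n + 3) → V) (hz : Function.Injective z)
    (ε : Fin (n + 3) → ℤ) (hε : ∀ i, ε i = 1 ∨ ε i = -1)
    (h : ∑ i : Fin (n + 3), ε i • bdrySymb V (n + 1) (i.removeNth z) = 0) :
    (∀ i : Fin (n + 3), ε i = (-1 : ℤ) ^ (i.val + 1)) ∨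
      (∀ i : Fin (n + 3), ε i = (-1 : ℤ) ^ i.val) := by
  have key : ∀ k : Fin (n + 2), ε k.succ = - ε k.castSucc := by
    intro k
    set b : Fin (n + 1) → V := k.removeNth (k.castSucc.removeNth z) with hb
    have hb' : k.removeNth (k.succ.removeNth z) = b := by
      funext m
      simp only [hb, Fin.removeNth]
      congr 1
      ext
      simp only [Fin.succAbove, Fin.lt_def]
      split_ifs <;> simp_all <;> omega
    have hbi : Function.Injective b := by
      intro x y hxy
      simp only [hb, Fin.removeNth] at hxy
      exact Fin.succAbove_right_injective (Fin.succAbove_right_injective (hz hxy))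
    have hbs : ∀ t : Fin (n + 3), t ≠ k.castSucc → t ≠ k.succ → ∃ m, b m = z t := by
      intro t h1 h2
      obtain ⟨u, rfl⟩ := Fin.exists_succAbove_eq h1
      have : u ≠ k := by
        rintro rfl
        simp at h2
      obtain ⟨m, rfl⟩ := Fin.exists_succAbove_eq this
      exact ⟨m, rfl⟩
    have hz1 : ∀ (i : Fin (n + 3)) (j : Fin (n + 2)), i ≠ k.castSucc → i ≠ k.succ →
        coefA V (n + 1) b (mkA V (n + 1) (j.removeNth (i.removeNth z))) = 0 := by
      intro i j h1 h2
      obtain ⟨m, hm⟩ := hbs i h1 h2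
      apply coefA_miss _ _ _ _ m
      intro x hx
      rw [hm] at hx
      exact Fin.succAbove_ne _ _ (hz hx)
    have hz2 : ∀ (i : Fin (n + 3)) (j : Fin (n + 2)), i.succAbove j ≠ k.castSucc →
        i.succAbove j ≠ k.succ →
        coefA V (n + 1) b (mkA V (n + 1) (j.removeNth (i.removeNth z))) = 0 := by
      intro i j h1 h2
      obtain ⟨m, hm⟩ := hbs _ h1 h2
      apply coefA_miss _ _ _ _ m
      intro x hx
      rw [hm] at hx
      exact Fin.succAbove_ne _ _ (Fin.succAbove_right_injective (hz hx))
    have h' := congrArg (coefA V (n + 1) b) h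
    simp only [map_sum, map_smul, bdrySymb, map_zero, smul_eq_mul] at h'
    rw [Fintype.sum_eq_add k.castSucc k.succ (by simp [Fin.ext_iff])
      (by
        rintro i ⟨h1, h2⟩
        simp [hz1 i _ h1 h2]),
      Fintype.sum_eq_single k (by
        intro j hj
        rw [hz2, mul_zero]
        · exact Fin.succAbove_ne _ _
        · intro h
          rw [← Fin.succAbove_castSucc_self k] at h
          exact hj (Fin.succAbove_right_injective h)),
      Fintype.sum_eq_single k (by
        intro j hj
        rw [hz2, mul_zero]
        · intro h
          rw [← Fin.succAbove_succ_self k] at h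
          exact hj (Fin.succAbove_right_injective h)
        · exact Fin.succAbove_ne _ _),
      hb', ← hb, coefA_self _ _ _ hbi, ← add_mul] at h'
    have := (mul_eq_zero.mp h').resolve_right (by simp)
    omega
  have all : ∀ i : Fin (n + 3), ε i = ε 0 * (-1) ^ i.val := by
    intro i
    induction i using Fin.induction with
    | zero => simp
    | succ k ih =>
      rw [key, ih]
      simp [pow_succ]
  rcases hε 0 with h0 | h0
  · right
    intro i
    rw [all, h0, one_mul]
  · left
    intro i
    rw [all, h0, pow_succ]
    ring
end

section
/- Let E be a finite-dimensional real affine (or vector) space, let ι be a finite index set with N elements, and let q : ι → E be a family of N points. If the affine span of the points q_i (i ∈ ι) has dimension exactly N − 2, then q has exactly one circuit: there is a unique subset s ⊆ ι such that the subfamily (q_i)_{i∈s} is affinely dependent while every proper subfamily of it is affinely independent. -/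
/-- A nonempty subset `s ⊆ ι` is a *circuit* of a family of points `q : ι → E`
if the subfamily `(q_i)_{i ∈ s}` is affinely dependent while every proper
subfamily of it is affinely independent. -/
def IsCircuit {E ι : Type*} [AddCommGroup E] [Module ℝ E] (q : ι → E) (s : Set ι) : Prop :=
  s.Nonempty ∧ ¬ AffineIndependent ℝ (fun i : s => q i) ∧
    ∀ s' : Set ι, s' ⊂ s → AffineIndependent ℝ (fun i : s' => q i)

/-- A sum over a subtype agrees with the full sum if the terms vanish outside. -/
theorem sum_sub_of_zero {M ι : Type*} [AddCommMonoid M] [Fintype ι] (s : Set ι) [Fintype s]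
    (f : ι → M) (hf : ∀ i, i ∉ s → f i = 0) : ∑ i : s, f i = ∑ i, f i := by
  classical
  rw [← Finset.sum_subset s.toFinset.subset_univ (by simpa using hf),
    Finset.sum_subtype (p := (· ∈ s)) _ (by simp)]

/-- Affine independence of a subfamily in terms of affine relations supported on it. -/
theorem indep_sub_iff {E ι : Type*} [AddCommGroup E] [Module ℝ E] [Fintype ι] (q : ι → E)
    (s : Set ι) : AffineIndependent ℝ (fun i : s => q i) ↔
      ∀ w : ι → ℝ, ∑ i, w i = 0 → ∑ i, w i • q i = 0 → Function.support w ⊆ s → w = 0 := by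
  classical
  rw [affineIndependent_iff_of_fintype]
  constructor
  · intro h w h0 h1 hs
    have hz : ∀ i, i ∉ s → w i = 0 := fun i hi => by
      by_contra hne
      exact hi (hs hne)
    have e0 : ∑ i : s, w i = 0 := by
      rw [← h0]
      exact sum_sub_of_zero s w hz
    have e1 : ∑ i : s, w i • q i = 0 := by
      rw [← h1]
      exact sum_sub_of_zero s (fun i => w i • q i) (fun i hi => by simp [hz i hi])
    have := h (fun i => w i) e0 (by
      rw [Finset.weightedVSub_eq_linear_combination _ e0]
      exact e1)
    funext i
    by_cases hi : i ∈ s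
    · exact this ⟨i, hi⟩
    · exact hz i hi
  · intro h w h0 h1 i
    rw [Finset.weightedVSub_eq_linear_combination _ h0] at h1
    let v : ι → ℝ := fun i => if hi : i ∈ s then w ⟨i, hi⟩ else 0
    have hv : ∀ i : s, v i = w i := fun i => by simp [v]
    have hz : ∀ i, i ∉ s → v i = 0 := fun i hi => by simp [v, hi]
    have e := h v ?_ ?_ ?_
    · rw [← hv, e]; rfl
    · rw [← h0, ← sum_sub_of_zero s v hz]
      simp [hv]
    · rw [← h1, ← sum_sub_of_zero s (fun i => v i • q i)
        (fun i hi => by simp [hz i hi])]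
      simp [hv]
    · intro i hi
      by_contra hn
      exact hi (hz i hn)

/-- A submodule of dimension one is a line. -/
theorem line_of_finrank {V : Type*} [AddCommGroup V] [Module ℝ V] (P : Submodule ℝ V)
    (h : Module.finrank ℝ P = 1) : ∃ v : P, v ≠ 0 ∧ ∀ w : P, ∃ c : ℝ, c • v = w :=
  finrank_eq_one_iff'.1 h

/-- The space of affine relations is a line. -/
theorem exists_relation {E ι : Type*} [AddCommGroup E] [Module ℝ E] [FiniteDimensional ℝ E]
    [Fintype ι] (q : ι → E)
    (h : Module.finrank ℝ (affineSpan ℝ (Set.range q)).direction + 2 = Fintype.card ι) :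
    ∃ w₀ : ι → ℝ, w₀ ≠ 0 ∧ ∑ i, w₀ i = 0 ∧ ∑ i, w₀ i • q i = 0 ∧
      ∀ w : ι → ℝ, ∑ i, w i = 0 → ∑ i, w i • q i = 0 → ∃ c : ℝ, c • w₀ = w := by
  classical
  have : Nonempty ι := by
    rw [← Fintype.card_pos_iff]; omega
  obtain ⟨i0⟩ := this
  let T : (ι → ℝ) →ₗ[ℝ] E := Fintype.linearCombination ℝ (fun i => q i - q i0)
  have hT : ∀ w, T w = ∑ i, w i • q i - (∑ i, w i) • q i0 := fun w => by
    simp [T, Fintype.linearCombination_apply, smul_sub, Finset.sum_sub_distrib, Finset.sum_smul]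
  have hr : LinearMap.range T = (affineSpan ℝ (Set.range q)).direction := by
    rw [direction_affineSpan, vectorSpan_range_eq_span_range_vsub_right ℝ q i0]
    exact Fintype.range_linearCombination ℝ _
  have h1 := T.finrank_range_add_finrank_ker
  rw [hr, Module.finrank_fintype_fun_eq_card] at h1
  let S : LinearMap.ker T →ₗ[ℝ] ℝ :=
    (Fintype.linearCombination ℝ (fun _ : ι => (1 : ℝ))).domRestrict (LinearMap.ker T)
  have hS : ∀ w, S w = ∑ i, w.1 i := fun w => by
    simp [S, Fintype.linearCombination_apply]
  have hSs : LinearMap.range S = ⊤ := by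
    apply LinearMap.range_eq_top.2
    intro c
    refine ⟨⟨Pi.single i0 c, ?_⟩, ?_⟩
    · simp [LinearMap.mem_ker, hT, Pi.single_apply, ite_smul]
    · simp [hS]
  have h2 := S.finrank_range_add_finrank_ker
  rw [hSs, finrank_top, Module.finrank_self] at h2
  have h3 : Module.finrank ℝ (LinearMap.ker S) = 1 := by omega
  obtain ⟨v, hv, hall⟩ := line_of_finrank (LinearMap.ker S) h3
  have hv0 : ∑ i, v.1.1 i = 0 := by rw [← hS]; exact v.2
  have hv1 := hT v.1.1
  rw [LinearMap.mem_ker.1 v.1.2, hv0, zero_smul, sub_zero] at hv1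
  refine ⟨v.1.1, fun hz => hv (Subtype.ext (Subtype.ext hz)), hv0, hv1.symm, ?_⟩
  intro w hw0 hw1
  obtain ⟨c, hc⟩ := hall ⟨⟨w, by simp [LinearMap.mem_ker, hT, hw0, hw1]⟩, by
    rw [LinearMap.mem_ker, hS]; exact hw0⟩
  exact ⟨c, congrArg (fun x => x.1.1) hc⟩

/-- Let `q : ι → E` be a family of `N` points in a finite-dimensional real
vector space whose affine span has dimension exactly `N − 2`.  Then `q` has
exactly one circuit. -/
theorem existsUnique_circuit_of_finrank_affineSpan
    {E ι : Type*} [AddCommGroup E] [Module ℝ E] [FiniteDimensional ℝ E]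
    [Fintype ι] (q : ι → E)
    (h : Module.finrank ℝ (affineSpan ℝ (Set.range q)).direction + 2 = Fintype.card ι) :
    ∃! s : Set ι, IsCircuit q s := by
  obtain ⟨w₀, hne, h0, h1, hall⟩ := exists_relation q h
  have key : ∀ s : Set ι, AffineIndependent ℝ (fun i : s => q i) ↔
      ¬ Function.support w₀ ⊆ s := by
    intro s
    rw [indep_sub_iff]
    constructor
    · exact fun H hs => hne (H w₀ h0 h1 hs)
    · intro H w hw0 hw1 hs
      obtain ⟨c, rfl⟩ := hall w hw0 hw1
      by_contra hc
      have hc0 : c ≠ 0 := fun hc0 => hc (by simp [hc0])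
      refine H fun i hi => hs ?_
      simp only [Function.mem_support, Pi.smul_apply, smul_eq_mul] at hi ⊢
      exact mul_ne_zero hc0 hi
  refine ⟨Function.support w₀, ⟨Function.support_nonempty_iff.2 hne, ?_, ?_⟩, ?_⟩
  · rw [key]; simp
  · intro s' hs'
    rw [key]
    exact hs'.2
  · rintro s ⟨-, hd, hm⟩
    rw [key, not_not] at hd
    by_contra hns
    exact (key _).1 (hm _ (hd.ssubset_of_ne (Ne.symm hns))) subset_rfl
end

section
/- Let C*_n denote the set of real symmetric positive semidefinite n×n matrices A such that the kernel of A is the real span of its rational points, i.e., ker A = W ⊗ ℝ for some ℚ-subspace W of ℚ^n (the case W = 0 giving the positive definite matrices). Then C*_n is a convex cone: it is closed under multiplication by positive scalars and under convex combinations. In particular, for A, B ∈ C*_n and t ∈ [0,1], the matrix tA + (1−t)B again lies in C*_n. -/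
open Matrix

/-- The minimal Satake bordification `C*_n`: the set of real symmetric positive
semidefinite `n×n` matrices `A` whose kernel is the real span of a ℚ-subspace
`W` of ℚ^n, i.e. `ker A = W ⊗ ℝ` (the case `W = 0` giving the positive
definite matrices). -/
def SatakeCone (n : ℕ) : Set (Matrix (Fin n) (Fin n) ℝ) :=
  {A | A.PosSemidef ∧ ∃ W : Submodule ℚ (Fin n → ℚ),
      (LinearMap.ker A.mulVecLin : Set (Fin n → ℝ)) =
        ↑(Submodule.span ℝ ((fun w : Fin n → ℚ => fun i => ((w i : ℝ))) '' (W : Set (Fin n → ℚ))))}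

/-- A real vector lies in `W ⊗ ℝ` iff all its images under `ℚ`-linear functionals of `ℝ`
lie in `W`. -/
theorem mem_span_cast_iff {n : ℕ} (W : Submodule ℚ (Fin n → ℚ)) (x : Fin n → ℝ) :
    x ∈ Submodule.span ℝ ((fun w : Fin n → ℚ => fun i => ((w i : ℝ))) '' (W : Set (Fin n → ℚ)))
      ↔ ∀ f : ℝ →ₗ[ℚ] ℚ, (fun i => f (x i)) ∈ W := by
  constructor
  · intro hx
    induction hx using Submodule.span_induction with
    | mem x hx =>
      obtain ⟨w, hw, rfl⟩ := hx
      intro f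
      have : (fun i => f ((w i : ℝ))) = f 1 • w := by
        funext i
        have h : ((w i : ℚ) : ℝ) = (w i) • (1 : ℝ) := by simp [Rat.smul_def]
        rw [h, map_smul]
        simp [mul_comm]
      simpa only [this] using W.smul_mem (f 1) hw
    | zero => intro f; simp only [Pi.zero_apply, map_zero]; exact W.zero_mem
    | add x y _ _ hx hy =>
      intro f
      have := W.add_mem (hx f) (hy f)
      convert this using 1
      funext i
      simp
    | smul r x _ hx =>
      intro f
      exact hx (f.comp (LinearMap.mulLeft ℚ r))
  · intro h
    classical
    let b := Module.Basis.ofVectorSpace ℚ ℝ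
    let s := Finset.univ.biUnion (fun i => (b.repr (x i)).support)
    have hx : x = ∑ j ∈ s, b j • (fun i => ((b.coord j (x i) : ℚ) : ℝ)) := by
      funext i
      have h1 := b.linearCombination_repr (x i)
      rw [Finsupp.linearCombination_apply, Finsupp.sum_of_support_subset (s := s)] at h1
      · rw [Finset.sum_apply]
        refine h1.symm.trans (Finset.sum_congr rfl fun j _ => ?_)
        simp [Rat.smul_def, mul_comm]
      · exact Finset.subset_biUnion_of_mem (fun i => (b.repr (x i)).support) (Finset.mem_univ i)
      · simp
    rw [hx]
    exact Submodule.sum_mem _ fun j _ => Submodule.smul_mem _ _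
      (Submodule.subset_span ⟨_, h (b.coord j), rfl⟩)

/-- `C*_n` is a convex cone: it is closed under multiplication by positive
scalars and under convex combinations `tA + (1−t)B`, `t ∈ [0,1]`. -/
theorem satakeCone_smul_mem_and_convex (n : ℕ) :
    (∀ A ∈ SatakeCone n, ∀ c : ℝ, 0 < c → c • A ∈ SatakeCone n) ∧
    (∀ A ∈ SatakeCone n, ∀ B ∈ SatakeCone n, ∀ t : ℝ, 0 ≤ t → t ≤ 1 →
        t • A + (1 - t) • B ∈ SatakeCone n) := by
  have hs : ∀ A ∈ SatakeCone n, ∀ c : ℝ, 0 < c → c • A ∈ SatakeCone n := by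
    rintro A ⟨hA, W, hW⟩ c hc
    refine ⟨hA.smul hc.le, W, ?_⟩
    rw [← hW]
    ext x
    simp [Matrix.smul_mulVec, hc.ne']
  refine ⟨hs, ?_⟩
  intro A hA B hB t h0 h1
  rcases h0.eq_or_lt with rfl | h0
  · simpa using hB
  rcases h1.eq_or_lt with rfl | h1
  · simpa using hA
  obtain ⟨pA, V, hV⟩ := hs A hA t h0
  obtain ⟨pB, W, hW⟩ := hs B hB (1 - t) (sub_pos.2 h1)
  generalize t • A = A' at *
  generalize (1 - t) • B = B' at *
  refine ⟨pA.add pB, V ⊓ W, ?_⟩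
  ext x
  have e1 := Set.ext_iff.1 hV x
  have e2 := Set.ext_iff.1 hW x
  simp only [SetLike.mem_coe, mem_span_cast_iff, LinearMap.mem_ker, Matrix.mulVecLin_apply]
    at e1 e2 ⊢
  simp only [Submodule.mem_inf, forall_and, ← e1, ← e2]
  constructor
  · intro h
    have hz : star x ⬝ᵥ (A' *ᵥ x) + star x ⬝ᵥ (B' *ᵥ x) = 0 := by
      rw [← dotProduct_add, ← Matrix.add_mulVec, h, dotProduct_zero]
    have nA := pA.dotProduct_mulVec_nonneg x
    have nB := pB.dotProduct_mulVec_nonneg x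
    exact ⟨(pA.dotProduct_mulVec_zero_iff x).1 (by linarith),
      (pB.dotProduct_mulVec_zero_iff x).1 (by linarith)⟩
  · rintro ⟨ha, hb⟩
    rw [Matrix.add_mulVec, ha, hb, add_zero]
end
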